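/- For any permutation w with no descents at or after position n, the Schubert polynomial satisfies 𝔖_w = Σ_{P ∈ QPD(w)} 𝔉_{wt(P)}. -/

import Mathlib

open scoped Classical

namespace SlidePaper

/-- Sum of the first `i` entries of a weak composition of length `n`. -/
def psum {n : ℕ} (a : Fin n → ℕ) (i : ℕ) : ℕ :=
  ∑ j ∈ Finset.univ.filter (fun j : Fin n => (j : ℕ) < i), a j

/-- `b` dominates `a`: all partial sums of `b` are at least those of `a`. -/
def Dominates {n : ℕ} (b a : Fin n → ℕ) : Prop :=
  ∀ i : Fin (n + 1), psum a i ≤ psum b i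

/-- The flattening of a weak composition: the list of its nonzero entries in order. -/
def flat {n : ℕ} (a : Fin n → ℕ) : List ℕ :=
  (List.ofFn a).filter (fun x => x ≠ 0)

/-- `β` refines `α`: `β` splits into consecutive blocks with sums `α₁, α₂, …`. -/
def Refines (β α : List ℕ) : Prop :=
  ∃ L : List (List ℕ), L.flatten = β ∧ L.map List.sum = α

/-- All weak compositions of length `n` with entries at most `k`. -/
def wcFinset (n k : ℕ) : Finset (Fin n → ℕ) :=
  Fintype.piFinset fun _ => Finset.range (k + 1)

/-- The monomial slide polynomial `𝔐_a`. -/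
noncomputable def slideM {n : ℕ} (a : Fin n → ℕ) : MvPolynomial (Fin n) ℤ :=
  ∑ b ∈ (wcFinset n (∑ i, a i)).filter (fun b => Dominates b a ∧ flat b = flat a),
    MvPolynomial.monomial (Finsupp.equivFunOnFinite.symm b) 1

/-- The fundamental slide polynomial `𝔉_a`. -/
noncomputable def slideF {n : ℕ} (a : Fin n → ℕ) : MvPolynomial (Fin n) ℤ :=
  ∑ b ∈ (wcFinset n (∑ i, a i)).filter (fun b => Dominates b a ∧ Refines (flat b) (flat a)),
    MvPolynomial.monomial (Finsupp.equivFunOnFinite.symm b) 1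

/-- A weak composition is quasi-flat if its nonzero entries occupy consecutive positions. -/
def QuasiFlat {n : ℕ} (a : Fin n → ℕ) : Prop :=
  ∀ i j l : Fin n, i ≤ j → j ≤ l → a i ≠ 0 → a l ≠ 0 → a j ≠ 0

/-- `b` strongly dominates `a`. -/
def StronglyDominates {n : ℕ} (b a : Fin n → ℕ) : Prop :=
  Dominates b a ∧ ∀ c : Fin n → ℕ, Dominates c a → flat c = flat b → Dominates c b

/-- The exponent vector placing the parts of `α` at the positions `i`. -/
noncomputable def placeExp {n : ℕ} (α : List ℕ) (i : Fin α.length → Fin n) : Fin n →₀ ℕ :=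
  ∑ t : Fin α.length, Finsupp.single (i t) (α.get t)

/-- `f` is quasisymmetric in the variables `x_1, …, x_k` (0-indexed: `x_0, …, x_{k-1}`). -/
def IsQuasisymmetricIn {n : ℕ} (k : ℕ) (f : MvPolynomial (Fin n) ℤ) : Prop :=
  ∀ α : List ℕ, (∀ x ∈ α, 0 < x) →
    ∀ i j : Fin α.length → Fin n, StrictMono i → StrictMono j →
      (∀ t, (i t : ℕ) < k) → (∀ t, (j t : ℕ) < k) →
      MvPolynomial.coeff (placeExp α i) f = MvPolynomial.coeff (placeExp α j) f

/-- The monomial quasisymmetric polynomial `M_α(x_1, …, x_k)` inside `ℤ[x_1, …, x_n]`. -/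
noncomputable def Mqs (n k : ℕ) (α : List ℕ) : MvPolynomial (Fin n) ℤ :=
  ∑ i ∈ (Finset.univ : Finset (Fin α.length → Fin n)).filter
      (fun i : Fin α.length → Fin n => StrictMono i ∧ ∀ t, (i t : ℕ) < k),
    ∏ t : Fin α.length, (MvPolynomial.X (i t) : MvPolynomial (Fin n) ℤ) ^ α.get t

/-- The fundamental quasisymmetric polynomial `F_α(x_1, …, x_k)` inside `ℤ[x_1, …, x_n]`. -/
noncomputable def Fqs (n k : ℕ) (α : List ℕ) : MvPolynomial (Fin n) ℤ :=
  ∑ c ∈ (Finset.univ : Finset (Composition α.sum)).filter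
      (fun c => Refines c.blocks α ∧ c.blocks.length ≤ k),
    Mqs n k c.blocks

/-- Place the weak composition `a` (of length `N`) at offset `k` inside length `M`. -/
def shiftComp {N : ℕ} (k M : ℕ) (a : Fin N → ℕ) : Fin M → ℕ :=
  fun i => if h : k ≤ (i : ℕ) ∧ (i : ℕ) - k < N then a ⟨(i : ℕ) - k, h.2⟩ else 0

/-- Spread the values `g` to positions `ι` inside a weak composition of length `n`. -/
def spread {l n : ℕ} (ι : Fin l → Fin n) (g : Fin l → ℕ) : Fin n → ℕ :=
  fun i => ∑ k, if ι k = i then g k else 0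

/-- The monomial quasisymmetric function `M_α` in infinitely many variables. -/
noncomputable def MqsFun (α : List ℕ) : MvPowerSeries ℕ ℤ :=
  fun d => if ∃ i : Fin α.length → ℕ, StrictMono i ∧
      d = ∑ t : Fin α.length, Finsupp.single (i t) (α.get t) then 1 else 0

/-- The fundamental quasisymmetric function `F_α` in infinitely many variables. -/
noncomputable def FqsFun (α : List ℕ) : MvPowerSeries ℕ ℤ :=
  ∑ c ∈ (Finset.univ : Finset (Composition α.sum)).filter (fun c => Refines c.blocks α),
    MqsFun c.blocks

/-- The cells of the Young diagram of `lam` (French notation): row `r` (from the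
bottom, 0-indexed) has `lam.get r` cells. -/
abbrev Cells (lam : List ℕ) := Σ r : Fin lam.length, Fin (lam.get r)

/-- A filling of `lam` with entries in `{1, …, n}` (encoded as `Fin n`) is a semistandard
Young tableau: rows weakly increase left to right, columns strictly increase bottom to top. -/
def IsSSYT {n : ℕ} {lam : List ℕ} (T : Cells lam → Fin n) : Prop :=
  (∀ (r : Fin lam.length) (c c' : Fin (lam.get r)), c ≤ c' → T ⟨r, c⟩ ≤ T ⟨r, c'⟩) ∧
  (∀ (r r' : Fin lam.length) (c' : Fin (lam.get r')) (h : (c' : ℕ) < lam.get r),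
      (r : ℕ) < (r' : ℕ) → T ⟨r, ⟨c', h⟩⟩ < T ⟨r', c'⟩)

/-- The weight of a filling: the `v`-th entry counts the occurrences of the value `v`. -/
def wtT {n : ℕ} {lam : List ℕ} (T : Cells lam → Fin n) : Fin n → ℕ :=
  fun v => (Finset.univ.filter (fun x : Cells lam => T x = v)).card

/-- A filling is quasi-Yamanouchi if for every value `v > 1`, the leftmost occurrence of `v`
lies weakly left of some occurrence of `v - 1`. -/
def IsQY {n : ℕ} {lam : List ℕ} (T : Cells lam → Fin n) : Prop :=
  ∀ (v : Fin n) (x : Cells lam), T x = v → 0 < (v : ℕ) →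
    (∀ y : Cells lam, T y = v → (x.2 : ℕ) ≤ (y.2 : ℕ)) →
    ∃ z : Cells lam, (T z : ℕ) + 1 = (v : ℕ) ∧ (x.2 : ℕ) ≤ (z.2 : ℕ)

/-- The Schur polynomial `s_lam(x_1, …, x_n)` as the generating function of
semistandard Young tableaux. -/
noncomputable def schurPoly (n : ℕ) (lam : List ℕ) : MvPolynomial (Fin n) ℤ :=
  ∑ T ∈ (Finset.univ : Finset (Cells lam → Fin n)).filter (fun T => IsSSYT T),
    MvPolynomial.monomial (Finsupp.equivFunOnFinite.symm (wtT T)) 1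

/-- One destandardization step on fillings: for some value `v` occurring in `T` whose
leftmost occurrence is strictly right of every occurrence of `v - 1`, every `v` is
decremented to `v - 1`. -/
def TabStep {n : ℕ} {lam : List ℕ} (T T' : Cells lam → Fin n) : Prop :=
  ∃ v : Fin n, 0 < (v : ℕ) ∧ (∃ x, T x = v) ∧
    (∀ x y : Cells lam, T x = v → (T y : ℕ) + 1 = (v : ℕ) → (y.2 : ℕ) < (x.2 : ℕ)) ∧
    ∀ x : Cells lam, (T' x : ℕ) = if T x = v then (v : ℕ) - 1 else (T x : ℕ)

/-- The reading word of a set of crosses: rows are read from top to bottom, each row from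
left to right, the cross in (0-indexed) row `i` and column `j` recording the letter `i + j`
(representing the simple transposition swapping `i + j` and `i + j + 1` of `{0, 1, 2, …}`). -/
def readWord (P : Finset (ℕ × ℕ)) : List ℕ :=
  ((List.range (P.sup Prod.fst + 1)).reverse).flatMap
    (fun i => ((List.range (P.sup Prod.snd + 1)).filter (fun j => decide ((i, j) ∈ P))).map
      (fun j => i + j))

/-- The permutation `s_{i_ℓ} ⋯ s_{i_1}` associated to the word `(i_1, …, i_ℓ)`,
where `s_k` swaps `k` and `k + 1`. -/
def wordPerm (l : List ℕ) : Equiv.Perm ℕ :=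
  ((l.map (fun k => Equiv.swap k (k + 1))).reverse).prod

/-- A word is reduced if no shorter word has the same product. -/
def IsReducedWord (l : List ℕ) : Prop :=
  ∀ l' : List ℕ, wordPerm l' = wordPerm l → l.length ≤ l'.length

/-- `P` is a reduced pipe dream of shape `w`: the pipes trace out `w` and no two pipes
cross more than once, equivalently the reading word of `P` is a reduced word for `w`. -/
def IsPD (w : Equiv.Perm ℕ) (P : Finset (ℕ × ℕ)) : Prop :=
  wordPerm (readWord P) = w ∧ IsReducedWord (readWord P)

/-- `P` is a quasi-Yamanouchi pipe dream of shape `w`: for every row, the westernmost cross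
is in the first column or lies weakly west of some cross in the row above. -/
def IsQPD (w : Equiv.Perm ℕ) (P : Finset (ℕ × ℕ)) : Prop :=
  IsPD w P ∧ ∀ i j : ℕ, (i, j) ∈ P → (∀ j', (i, j') ∈ P → j ≤ j') →
    (j = 0 ∨ ∃ j', (i + 1, j') ∈ P ∧ j ≤ j')

/-- One destandardization step on pipe dreams: a row with no cross in the first column,
all of whose crosses lie strictly east of every cross in the row above, has all its
crosses moved one step northwest. -/
def PDStep (P P' : Finset (ℕ × ℕ)) : Prop :=
  ∃ r : ℕ, (∃ j, (r, j) ∈ P) ∧ (r, 0) ∉ P ∧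
    (∀ j j', (r, j) ∈ P → (r + 1, j') ∈ P → j' < j) ∧
    P' = P.filter (fun p => p.1 ≠ r) ∪
      (P.filter (fun p => p.1 = r)).image (fun p => (r + 1, p.2 - 1))

/-- The number of crosses of `P` in (0-indexed) row `i`. -/
def rowWt (P : Finset (ℕ × ℕ)) (i : ℕ) : ℕ := (P.filter (fun p => p.1 = i)).card

/-- The weight of a pipe dream, as a weak composition of length `n`. -/
def wtFin (n : ℕ) (P : Finset (ℕ × ℕ)) : Fin n → ℕ := fun i => rowWt P (i : ℕ)

/-- The flattened weight of a pipe dream: the list of nonzero row counts, bottom row first. -/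
def flatWt (P : Finset (ℕ × ℕ)) : List ℕ :=
  ((List.range (P.sup Prod.fst + 1)).map (rowWt P)).filter (fun x => x ≠ 0)

/-- The Schubert polynomial of `w` in the variables `x_1, …, x_n`, as the generating
function of reduced pipe dreams of shape `w`. -/
noncomputable def SchubertPoly (n : ℕ) (w : Equiv.Perm ℕ) : MvPolynomial (Fin n) ℤ :=
  ∑ᶠ P ∈ {P : Finset (ℕ × ℕ) | IsPD w P},
    MvPolynomial.monomial (Finsupp.equivFunOnFinite.symm (wtFin n P)) 1

/-- The Lehmer code of `w` (0-indexed): `lehmer w i` counts `j > i` with `w j < w i`. -/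
noncomputable def lehmer (w : Equiv.Perm ℕ) (i : ℕ) : ℕ :=
  Set.ncard {j : ℕ | i < j ∧ w j < w i}

/-- The Lehmer code of `w` as a weak composition of length `n`. -/
noncomputable def lehmerFin (n : ℕ) (w : Equiv.Perm ℕ) : Fin n → ℕ :=
  fun i => lehmer w (i : ℕ)

/-- The number of inversions of `w`. -/
noncomputable def invCount (w : Equiv.Perm ℕ) : ℕ :=
  Set.ncard {p : ℕ × ℕ | p.1 < p.2 ∧ w p.2 < w p.1}

/-- The largest entry of the Lehmer code of `w`. -/
noncomputable def maxLehmer (w : Equiv.Perm ℕ) : ℕ :=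
  sSup (Set.range (lehmer w))

/-- The (0-indexed) position of the first descent of `w`. -/
noncomputable def firstDescent (w : Equiv.Perm ℕ) : ℕ :=
  sInf {i : ℕ | w (i + 1) < w i}

/-- `δ(w) = 1` if every position attaining `max(L(w))` is at or before the first descent,
and `δ(w) = 0` otherwise. -/
noncomputable def delta (w : Equiv.Perm ℕ) : ℤ :=
  if ∀ i : ℕ, lehmer w i = maxLehmer w → i ≤ firstDescent w then 1 else 0

/-- `η(w) = inv(w) − max(L(w)) + δ(w) − min{i : w_i > w_{i+1}}`. -/
noncomputable def eta (w : Equiv.Perm ℕ) : ℤ :=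
  (invCount w : ℤ) - (maxLehmer w : ℤ) + delta w - ((firstDescent w : ℤ) + 1)

/-- The decomposition of a list into maximal strictly increasing runs. -/
def runsStrict : List ℕ → List (List ℕ)
  | [] => []
  | x :: rest =>
    match runsStrict rest, rest with
    | r :: rs, y :: _ => if x < y then (x :: r) :: rs else [x] :: r :: rs
    | _, _ => [[x]]

/-- The descent composition of a word: lengths of its maximal increasing runs, a new run
beginning whenever a letter is followed by a weakly smaller letter. -/
def desStrict (l : List ℕ) : List ℕ := (runsStrict l).map List.length

/-- The decomposition of a list into maximal weakly increasing runs. -/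
def runsWeak : List ℕ → List (List ℕ)
  | [] => []
  | x :: rest =>
    match runsWeak rest, rest with
    | r :: rs, y :: _ => if x ≤ y then (x :: r) :: rs else [x] :: r :: rs
    | _, _ => [[x]]

/-- The descent composition of a word: the lengths of its maximal weakly increasing runs. -/
def desComp (l : List ℕ) : List ℕ := (runsWeak l).map List.length

/-- The permutation `1^m × w`, fixing `0, …, m-1` and acting by `w` shifted by `m` above. -/
def shiftPerm (m : ℕ) (w : Equiv.Perm ℕ) : Equiv.Perm ℕ where
  toFun i := if i < m then i else w (i - m) + m
  invFun i := if i < m then i else w.symm (i - m) + m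
  left_inv i := by
    dsimp only
    by_cases h : i < m
    · simp [h]
    · have h2 : ¬ (w (i - m) + m < m) := by omega
      rw [if_neg h, if_neg h2, Nat.add_sub_cancel, Equiv.symm_apply_apply]
      omega
  right_inv i := by
    dsimp only
    by_cases h : i < m
    · simp [h]
    · have h2 : ¬ (w.symm (i - m) + m < m) := by omega
      rw [if_neg h, if_neg h2, Nat.add_sub_cancel, Equiv.apply_symm_apply]
      omega

/-- The quasi-shuffle product of two (strong) compositions, as a multiset of compositions. -/
def qShuffle : List ℕ → List ℕ → Multiset (List ℕ)
  | [], β => {β}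
  | α, [] => {α}
  | a :: α, b :: β =>
      ((qShuffle α (b :: β)).map (a :: ·)) + ((qShuffle (a :: α) β).map (b :: ·)) +
        ((qShuffle α β).map ((a + b) :: ·))
termination_by α β => α.length + β.length
decreasing_by all_goals (simp only [List.length_cons]; omega)

def shuffles : List ℕ → List ℕ → Multiset (List ℕ)
  | [], B => {B}
  | A, [] => {A}
  | x :: A, y :: B =>
      ((shuffles A (y :: B)).map (x :: ·)) + ((shuffles (x :: A) B).map (y :: ·))
termination_by A B => A.length + B.length
decreasing_by all_goals (simp only [List.length_cons]; omega)

/-- The word `(2n-1)^{a_1} (2n-3)^{a_2} ⋯ 1^{a_n}` associated to a weak composition `a`. -/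
def wordA {n : ℕ} (a : Fin n → ℕ) : List ℕ :=
  (List.ofFn (fun i : Fin n => List.replicate (a i) (2 * n - 2 * (i : ℕ) - 1))).flatten

/-- The word `(2n)^{b_1} (2n-2)^{b_2} ⋯ 2^{b_n}` associated to a weak composition `b`. -/
def wordB {n : ℕ} (b : Fin n → ℕ) : List ℕ :=
  (List.ofFn (fun i : Fin n => List.replicate (b i) (2 * n - 2 * (i : ℕ)))).flatten

/-- A list (padded with trailing zeros) dominates a weak composition of length `n`. -/
def DominatesList {n : ℕ} (l : List ℕ) (a : Fin n → ℕ) : Prop :=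
  ∀ i : Fin (n + 1), psum a (i : ℕ) ≤ ((l.take (i : ℕ)).sum)

/-- The number of letters of the `A`-word (the odd letters) in the `k`-th weakly
increasing run of `C`. -/
def runCountA (C : List ℕ) (k : Fin (runsWeak C).length) : ℕ :=
  (((runsWeak C).get k).filter (fun z => z % 2 = 1)).length

/-- The number of letters of the `B`-word (the even letters) in the `k`-th weakly
increasing run of `C`. -/
def runCountB (C : List ℕ) (k : Fin (runsWeak C).length) : ℕ :=
  (((runsWeak C).get k).filter (fun z => z % 2 = 0)).length

/-- The length of the `k`-th weakly increasing run of `C`. -/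
def runLen (C : List ℕ) (k : Fin (runsWeak C).length) : ℕ :=
  ((runsWeak C).get k).length

/-- `c = bump_{(a,b)}(C)`: the unique weak composition of length `n` obtained by inserting
zero parts into `Des(C)` so that the correspondingly placed `Des_A` and `Des_B` dominate
`a` and `b`, minimal in dominance order among all such insertions. -/
def IsBumpS {n : ℕ} (a b : Fin n → ℕ) (C : List ℕ) (c : Fin n → ℕ) : Prop :=
  ∃ ι : Fin (runsWeak C).length → Fin n, StrictMono ι ∧
    c = spread ι (runLen C) ∧
    Dominates (spread ι (runCountA C)) a ∧ Dominates (spread ι (runCountB C)) b ∧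
    ∀ ι' : Fin (runsWeak C).length → Fin n, StrictMono ι' →
      Dominates (spread ι' (runCountA C)) a → Dominates (spread ι' (runCountB C)) b →
      Dominates (spread ι' (runLen C)) c

/-- The multiplicity `[c ∣ a ⧢ b]` of `c` in the slide product of `a` and `b`: the number of
shuffles `C` of the words of `a` and `b` lying in the shuffle set `SS(a,b)` with
`bump_{(a,b)}(C) = c`. -/
noncomputable def slideMult {n : ℕ} (a b c : Fin n → ℕ) : ℕ :=
  Multiset.card ((shuffles (wordA a) (wordB b)).filter
    (fun C => DominatesList ((runsWeak C).map
        (fun r => (r.filter (fun z => z % 2 = 1)).length)) a ∧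
      DominatesList ((runsWeak C).map (fun r => (r.filter (fun z => z % 2 = 0)).length)) b ∧
      IsBumpS a b C c))

/-- Membership in the quasi-shuffle set `QSS(a,b)`: a pair `(γ_a, γ_b)` of weak compositions
of a common length at most `n` with `γ_a ≥ a`, `flat(γ_a) = flat(a)`, `γ_b ≥ b`,
`flat(γ_b) = flat(b)` (after padding with trailing zeros), and all entries of
`γ_a + γ_b` positive. -/
def InQSS {n : ℕ} (a b : Fin n → ℕ) (x : (l : ℕ) × (Fin l → ℕ) × (Fin l → ℕ)) : Prop :=
  x.1 ≤ n ∧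
  Dominates (shiftComp 0 n x.2.1) a ∧ flat x.2.1 = flat a ∧
  Dominates (shiftComp 0 n x.2.2) b ∧ flat x.2.2 = flat b ∧
  ∀ k : Fin x.1, 0 < x.2.1 k + x.2.2 k

/-- `c = bump_{(a,b)}(γ_a, γ_b)`: the unique weak composition `c` of length `n` with
`flat(c) = γ_a + γ_b` whose decomposition `c = c_a + c_b` satisfies `c_a ≥ a` and
`c_b ≥ b`, minimal in dominance order among all such compositions. -/
def IsBumpQ {n : ℕ} (a b : Fin n → ℕ) (x : (l : ℕ) × (Fin l → ℕ) × (Fin l → ℕ))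
    (c : Fin n → ℕ) : Prop :=
  ∃ ι : Fin x.1 → Fin n, StrictMono ι ∧
    c = spread ι (fun k => x.2.1 k + x.2.2 k) ∧
    Dominates (spread ι x.2.1) a ∧ Dominates (spread ι x.2.2) b ∧
    ∀ ι' : Fin x.1 → Fin n, StrictMono ι' →
      Dominates (spread ι' x.2.1) a → Dominates (spread ι' x.2.2) b →
      Dominates (spread ι' (fun k => x.2.1 k + x.2.2 k)) c

/-- The multiplicity `[c ∣ a ⧻ b]` of `c` in the quasi-slide product of `a` and `b`: the
number of pairs in the quasi-shuffle set `QSS(a,b)` whose bump is `c`. -/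
noncomputable def qsMult {n : ℕ} (a b c : Fin n → ℕ) : ℕ :=
  Nat.card {x : (l : ℕ) × (Fin l → ℕ) × (Fin l → ℕ) // InQSS a b x ∧ IsBumpQ a b x c}

/-- The Stanley symmetric function `S_w`. -/
noncomputable def StanleySym (w : Equiv.Perm ℕ) : MvPowerSeries ℕ ℤ :=
  ∑ᶠ l ∈ {l : List ℕ | wordPerm l = w ∧ IsReducedWord l}, FqsFun (desStrict l)

/-! ### Words and descents -/

theorem wordPerm_nil : wordPerm [] = 1 := rfl

theorem wordPerm_cons (k : ℕ) (l : List ℕ) :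
    wordPerm (k :: l) = wordPerm l * Equiv.swap k (k + 1) := by
  simp [wordPerm]

theorem swap_lt_swap_or (m a b : ℕ) (hab : a < b) :
    Equiv.swap m (m + 1) a < Equiv.swap m (m + 1) b ∨ (a = m ∧ b = m + 1) := by
  simp only [Equiv.swap_apply_def]
  split_ifs <;> omega

/-- The strong exchange condition. -/
theorem exists_word_of_inversion (l : List ℕ) :
    ∀ a b : ℕ, a < b → wordPerm l b < wordPerm l a →
      ∃ l' : List ℕ, l'.length + 1 = l.length ∧ wordPerm l' = wordPerm l * Equiv.swap a b := by
  induction l with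
  | nil =>
    intro a b hab h
    simp only [wordPerm_nil, Equiv.Perm.coe_one, id] at h
    omega
  | cons m t ih =>
    intro a b hab h
    rcases swap_lt_swap_or m a b hab with h1 | ⟨rfl, rfl⟩
    · obtain ⟨t', hlen, ht'⟩ := ih _ _ h1 (by simpa [wordPerm_cons] using h)
      refine ⟨m :: t', by simp [hlen], ?_⟩
      rw [wordPerm_cons, wordPerm_cons, ht', mul_assoc, mul_assoc]
      congr 1
      exact (Equiv.mul_swap_eq_swap_mul _ _ _).symm
    · exact ⟨t, by simp, by rw [wordPerm_cons, mul_assoc, Equiv.swap_mul_self, mul_one]⟩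

theorem IsReducedWord.tail {k : ℕ} {l : List ℕ} (h : IsReducedWord (k :: l)) :
    IsReducedWord l := by
  intro l' hl'
  have := h (k :: l') (by rw [wordPerm_cons, wordPerm_cons, hl'])
  simpa using this

theorem IsReducedWord.descent {k : ℕ} {l : List ℕ} (h : IsReducedWord (k :: l)) :
    wordPerm (k :: l) (k + 1) < wordPerm (k :: l) k := by
  by_contra hlt
  have hne : wordPerm (k :: l) k ≠ wordPerm (k :: l) (k + 1) := fun e => by
    have := (wordPerm (k :: l)).injective e
    omega
  have hlt' : wordPerm l (k + 1) < wordPerm l k := by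
    have : wordPerm (k :: l) k < wordPerm (k :: l) (k + 1) := by omega
    simpa [wordPerm_cons] using this
  obtain ⟨l', hlen, hl'⟩ := exists_word_of_inversion l k (k + 1) (by omega) hlt'
  have := h l' (by rw [hl', wordPerm_cons])
  simp only [List.length_cons] at this
  omega

theorem IsReducedWord.isChain_ne {l : List ℕ} (h : IsReducedWord l) :
    l.IsChain (· ≠ ·) := by
  induction l with
  | nil => simp
  | cons k t ih =>
    cases t with
    | nil => simp
    | cons m t =>
      refine List.isChain_cons_cons.2 ⟨?_, ih h.tail⟩
      rintro rfl
      have := h t (by simp [wordPerm_cons, mul_assoc])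
      simp only [List.length_cons] at this
      omega

theorem IsReducedWord.letter_lt {N : ℕ} {l : List ℕ} (h : IsReducedWord l)
    (hfix : ∀ i, N ≤ i → wordPerm l i = i) : ∀ k ∈ l, k < N := by
  induction l with
  | nil => simp
  | cons k t ih =>
    have hd := h.descent
    have hk : k + 1 < N := by
      by_contra hk
      rw [hfix (k + 1) (by omega)] at hd
      have h1 : N ≤ wordPerm (k :: t) k := by omega
      have := (wordPerm (k :: t)).injective (hfix _ h1)
      omega
    have ht : ∀ i, N ≤ i → wordPerm t i = i := by
      intro i hi
      have := hfix i hi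
      rwa [wordPerm_cons, Equiv.Perm.mul_apply,
        Equiv.swap_apply_of_ne_of_ne (by omega) (by omega)] at this
    intro x hx
    rcases List.mem_cons.1 hx with rfl | hx
    · omega
    · exact ih h.tail ht x hx

/-! ### The reading order on crosses -/

/-- The reading order: rows from top to bottom, each row from left to right. -/
def ReadBefore (x y : ℕ × ℕ) : Prop := y.1 < x.1 ∨ (x.1 = y.1 ∧ x.2 < y.2)

/-- The crosses of `P` listed in reading order. -/
def readCells (P : Finset (ℕ × ℕ)) : List (ℕ × ℕ) :=
  ((List.range (P.sup Prod.fst + 1)).reverse).flatMap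
    (fun i => ((List.range (P.sup Prod.snd + 1)).filter (fun j => decide ((i, j) ∈ P))).map
      (fun j => (i, j)))

theorem readWord_eq_map (P : Finset (ℕ × ℕ)) :
    readWord P = (readCells P).map (fun x => x.1 + x.2) := by
  simp [readWord, readCells, List.map_flatMap, Function.comp_def]

theorem mem_readCells {P : Finset (ℕ × ℕ)} {x : ℕ × ℕ} : x ∈ readCells P ↔ x ∈ P := by
  obtain ⟨i, j⟩ := x
  simp only [readCells, List.mem_flatMap, List.mem_reverse, List.mem_range, List.mem_map,
    List.mem_filter, decide_eq_true_eq, Prod.mk.injEq]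
  constructor
  · rintro ⟨_, _, _, ⟨_, h⟩, rfl, rfl⟩
    exact h
  · intro h
    have h1 : i ≤ P.sup Prod.fst := Finset.le_sup (f := Prod.fst) h
    have h2 : j ≤ P.sup Prod.snd := Finset.le_sup (f := Prod.snd) h
    exact ⟨i, by omega, j, ⟨by omega, h⟩, rfl, rfl⟩

theorem pairwise_readCells (P : Finset (ℕ × ℕ)) : (readCells P).Pairwise ReadBefore := by
  rw [readCells, List.pairwise_flatMap]
  constructor
  · intro i _
    rw [List.pairwise_map]
    exact (List.pairwise_lt_range.filter _).imp fun h => Or.inr ⟨rfl, h⟩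
  · rw [List.pairwise_reverse]
    refine List.pairwise_lt_range.imp fun h => ?_
    intro x hx y hy
    simp only [List.mem_map] at hx hy
    obtain ⟨_, _, rfl⟩ := hx
    obtain ⟨_, _, rfl⟩ := hy
    exact Or.inl h

theorem readCells_eq {P : Finset (ℕ × ℕ)} {L : List (ℕ × ℕ)} (hL : L.Pairwise ReadBefore)
    (hP : ∀ x, x ∈ L ↔ x ∈ P) : readCells P = L := by
  have hne : ∀ {x y : ℕ × ℕ}, ReadBefore x y → x ≠ y := by
    rintro x y h rfl
    simp [ReadBefore] at h
  refine List.Perm.eq_of_pairwise (le := ReadBefore) ?_ (pairwise_readCells P) hL ?_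
  · intro x y _ _ h1 h2
    unfold ReadBefore at h1 h2
    omega
  · refine (List.perm_ext_iff_of_nodup ((pairwise_readCells P).imp hne) (hL.imp hne)).2 ?_
    intro x
    rw [mem_readCells, hP]

/-! ### Compatible sequences -/

/-- `r` is a compatible sequence of rows for the word `a 0, …, a (ℓ - 1)`. -/
def IsCompat (ℓ : ℕ) (a r : ℕ → ℕ) : Prop :=
  (∀ p, p < ℓ → r p ≤ a p) ∧
    ∀ p, p + 1 < ℓ → r (p + 1) ≤ r p ∧ (a (p + 1) ≤ a p → r (p + 1) < r p)

/-- The set of crosses with letters `a` placed in rows `r`. -/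
def ofRows (ℓ : ℕ) (a r : ℕ → ℕ) : Finset (ℕ × ℕ) :=
  (Finset.range ℓ).image fun p => (r p, a p - r p)

theorem mem_ofRows {ℓ : ℕ} {a r : ℕ → ℕ} {i j : ℕ} :
    (i, j) ∈ ofRows ℓ a r ↔ ∃ p, p < ℓ ∧ r p = i ∧ a p - r p = j := by
  simp [ofRows]

theorem IsCompat.antitone {ℓ : ℕ} {a r : ℕ → ℕ} (h : IsCompat ℓ a r) {p q : ℕ}
    (hpq : p ≤ q) (hq : q < ℓ) : r q ≤ r p := by
  induction q, hpq using Nat.le_induction with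
  | base => exact le_rfl
  | succ q hpq ih => exact (h.2 q hq).1.trans (ih (by omega))

theorem IsCompat.le_of_row_eq {ℓ : ℕ} {a r : ℕ → ℕ} (h : IsCompat ℓ a r) {p q : ℕ}
    (hpq : p ≤ q) (hq : q < ℓ) (hr : r p = r q) : a p + (q - p) ≤ a q := by
  induction q, hpq using Nat.le_induction with
  | base => simp
  | succ q hpq ih =>
    have h1 := h.2 q hq
    have h2 := h.antitone hpq (by omega)
    have h3 := ih (by omega) (by omega)
    by_cases h4 : a (q + 1) ≤ a q
    · have := h1.2 h4
      omega
    · omega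

theorem IsCompat.readBefore {ℓ : ℕ} {a r : ℕ → ℕ} (h : IsCompat ℓ a r) {p q : ℕ}
    (hpq : p < q) (hq : q < ℓ) : ReadBefore (r p, a p - r p) (r q, a q - r q) := by
  have h1 := h.antitone hpq.le hq
  have h2 := h.1 p (by omega)
  have h3 := h.1 q hq
  simp only [ReadBefore]
  by_cases h4 : r p = r q
  · have := h.le_of_row_eq hpq.le hq h4
    omega
  · omega

theorem IsCompat.injOn {ℓ : ℕ} {a r : ℕ → ℕ} (h : IsCompat ℓ a r) :
    Set.InjOn (fun p => (r p, a p - r p)) (Finset.range ℓ : Set ℕ) := by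
  intro p hp q hq e
  simp only [Finset.coe_range, Set.mem_Iio] at hp hq
  simp only [Prod.mk.injEq] at e
  by_contra hne
  rcases Nat.lt_or_gt_of_ne hne with hlt | hlt
  · have := h.readBefore hlt hq
    simp only [ReadBefore] at this
    omega
  · have := h.readBefore hlt hp
    simp only [ReadBefore] at this
    omega

theorem readWord_ofRows {ℓ : ℕ} {a r : ℕ → ℕ} (h : IsCompat ℓ a r) :
    readWord (ofRows ℓ a r) = (List.range ℓ).map a := by
  have hL : readCells (ofRows ℓ a r) = (List.range ℓ).map fun p => (r p, a p - r p) := by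
    refine readCells_eq ?_ ?_
    · rw [List.pairwise_map]
      refine List.pairwise_lt_range.imp_of_mem ?_
      intro p q _ hq hpq
      exact h.readBefore hpq (List.mem_range.1 hq)
    · intro x
      simp [ofRows]
  rw [readWord_eq_map, hL, List.map_map]
  refine List.map_congr_left fun p hp => ?_
  have := h.1 p (List.mem_range.1 hp)
  simp only [Function.comp_apply]
  omega

/-- The `p`-th letter of a word. -/
def letter (l : List ℕ) (p : ℕ) : ℕ := l.getD p 0

theorem map_letter (l : List ℕ) : (List.range l.length).map (letter l) = l := by
  refine List.ext_getElem (by simp) fun i h1 h2 => ?_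
  simp [letter, h2]

theorem exists_eq_ofRows (P : Finset (ℕ × ℕ)) :
    ∃ r, IsCompat (readWord P).length (letter (readWord P)) r ∧
      P = ofRows (readWord P).length (letter (readWord P)) r := by
  set L := readCells P with hL
  have hlen : (readWord P).length = L.length := by rw [readWord_eq_map, List.length_map]
  have hlet : ∀ p (hp : p < L.length), letter (readWord P) p = L[p].1 + L[p].2 := by
    intro p hp
    have hp' : p < (readWord P).length := hlen ▸ hp
    rw [letter, List.getD_eq_getElem _ _ hp']
    simp only [readWord_eq_map, List.getElem_map]
    rfl
  have hrow : ∀ p (hp : p < L.length), (L.getD p (0, 0)).1 = L[p].1 := by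
    intro p hp
    rw [List.getD_eq_getElem _ _ hp]
  refine ⟨fun p => (L.getD p (0, 0)).1, ⟨?_, ?_⟩, ?_⟩
  · intro p hp
    rw [hlen] at hp
    simp only [hlet p hp, hrow p hp]
    omega
  · intro p hp
    rw [hlen] at hp
    have hs := List.pairwise_iff_getElem.1 (hL ▸ pairwise_readCells P) p (p + 1) (by omega) hp
      (by omega)
    simp only [hlet p (by omega), hrow p (by omega), hlet _ hp, hrow _ hp]
    unfold ReadBefore at hs
    omega
  · ext ⟨i, j⟩
    rw [mem_ofRows, ← mem_readCells, ← hL, List.mem_iff_getElem, hlen]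
    constructor
    · rintro ⟨p, hp, e⟩
      refine ⟨p, hp, ?_⟩
      rw [hlet p hp]
      simp only [hrow p hp, e, true_and]
      omega
    · rintro ⟨p, hp, e1, e2⟩
      refine ⟨p, hp, ?_⟩
      rw [hlet p hp] at e2
      simp only [hrow p hp] at e1 e2
      ext
      · exact e1
      · simp only
        omega

theorem ofRows_congr {ℓ : ℕ} {a r s : ℕ → ℕ} (h : ∀ p, p < ℓ → r p = s p) :
    ofRows ℓ a r = ofRows ℓ a s := by
  refine Finset.image_congr fun p hp => ?_
  simp [h p (by simpa using hp)]

/-! ### Quasi-Yamanouchi sequences -/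

/-- The compatible sequence `r` takes the largest possible row at every step. -/
def IsGreedy (ℓ : ℕ) (a r : ℕ → ℕ) : Prop :=
  (0 < ℓ → r 0 = a 0) ∧ ∀ p, p + 1 < ℓ → r (p + 1) < r p →
    r (p + 1) = a (p + 1) ∨ (r p = r (p + 1) + 1 ∧ a (p + 1) ≤ a p)

theorem isGreedy_iff {ℓ : ℕ} {a r : ℕ → ℕ} (h : IsCompat ℓ a r)
    (hne : ∀ p, p + 1 < ℓ → a p ≠ a (p + 1)) :
    IsGreedy ℓ a r ↔ ∀ i j : ℕ, (i, j) ∈ ofRows ℓ a r →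
      (∀ j', (i, j') ∈ ofRows ℓ a r → j ≤ j') →
        (j = 0 ∨ ∃ j', (i + 1, j') ∈ ofRows ℓ a r ∧ j ≤ j') := by
  simp only [mem_ofRows]
  constructor
  · rintro ⟨h0, hs⟩ i j ⟨q, hq, rfl, rfl⟩ hmin
    cases q with
    | zero =>
      have := h0 hq
      omega
    | succ p =>
      have hc := h.2 p hq
      have hb := h.1 p (by omega)
      have hb' := h.1 (p + 1) hq
      have hn := hne p hq
      by_cases he : r (p + 1) = r p
      · have := hmin _ ⟨p, by omega, he.symm, rfl⟩
        omega
      · rcases hs p hq (by omega) with h1 | ⟨h1, h2⟩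
        · omega
        · exact Or.inr ⟨_, ⟨p, by omega, h1, rfl⟩, by omega⟩
  · intro H
    have hfirst : ∀ q, q < ℓ → (∀ p, p < q → r p ≠ r q) →
        r q = a q ∨ ∃ p, p < q ∧ r p = r q + 1 ∧ a q < a p := by
      intro q hq hmin
      have hb := h.1 q hq
      have hwest : ∀ j', (∃ p, p < ℓ ∧ r p = r q ∧ a p - r p = j') → a q - r q ≤ j' := by
        rintro _ ⟨p, hp, e, rfl⟩
        have hqp : q ≤ p := by
          by_contra hpq
          exact hmin p (by omega) e
        have := h.le_of_row_eq hqp hp e.symm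
        omega
      rcases H (r q) _ ⟨q, hq, rfl, rfl⟩ hwest with h1 | ⟨_, ⟨p, hp, h1, rfl⟩, h2⟩
      · omega
      · have hb' := h.1 p hp
        refine Or.inr ⟨p, ?_, h1, by omega⟩
        by_contra hpq
        have := h.antitone (not_lt.1 hpq) hp
        omega
    constructor
    · intro hl
      rcases hfirst 0 hl (by omega) with h1 | ⟨p, hp, _⟩
      · exact h1
      · omega
    · intro p hp hlt
      have hfst : ∀ q, q < p + 1 → r q ≠ r (p + 1) := fun q hq => by
        have := h.antitone (Nat.le_of_lt_succ hq) (by omega)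
        omega
      rcases hfirst (p + 1) hp hfst with h1 | ⟨q, hq, h1, h2⟩
      · exact Or.inl h1
      · have h3 := h.antitone (Nat.le_of_lt_succ hq) (by omega)
        have h4 := h.le_of_row_eq (Nat.le_of_lt_succ hq) (by omega) (by omega)
        exact Or.inr ⟨by omega, by omega⟩

theorem IsGreedy.le {ℓ : ℕ} {a r s : ℕ → ℕ} (hg : IsGreedy ℓ a s) (hs : IsCompat ℓ a s)
    (hr : IsCompat ℓ a r) : ∀ p, p < ℓ → r p ≤ s p := by
  intro p
  induction p with
  | zero =>
    intro hp
    rw [hg.1 hp]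
    exact hr.1 0 hp
  | succ p ih =>
    intro hp
    have h1 := ih (by omega)
    have h2 := hr.2 p hp
    have h3 := hs.2 p hp
    by_cases hlt : s (p + 1) < s p
    · rcases hg.2 p hp hlt with h4 | ⟨h4, h5⟩
      · rw [h4]
        exact hr.1 _ hp
      · have := h2.2 h5
        omega
    · omega

theorem IsGreedy.descent {ℓ : ℕ} {a r : ℕ → ℕ} (hg : IsGreedy ℓ a r) (h : IsCompat ℓ a r)
    {p : ℕ} (hp : p + 1 < ℓ) (hlt : r (p + 1) < r p) : a (p + 1) ≤ a p := by
  have := h.1 p (by omega)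
  rcases hg.2 p hp hlt with h1 | ⟨_, h1⟩
  · omega
  · exact h1

/-- The greedy sequence of rows for the word `a`. -/
def greedyRows (a : ℕ → ℕ) : ℕ → ℕ
  | 0 => a 0
  | p + 1 => if a (p + 1) ≤ a p then min (a (p + 1)) (greedyRows a p - 1) else greedyRows a p

theorem greedyRows_le (a : ℕ → ℕ) (p : ℕ) : greedyRows a p ≤ a p := by
  induction p with
  | zero => simp [greedyRows]
  | succ p ih =>
    simp only [greedyRows]
    split_ifs <;> omega

theorem le_greedyRows {ℓ : ℕ} {a r : ℕ → ℕ} (hr : IsCompat ℓ a r) :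
    ∀ p, p < ℓ → r p ≤ greedyRows a p := by
  intro p
  induction p with
  | zero => exact hr.1 0
  | succ p ih =>
    intro hp
    have h1 := ih (by omega)
    have h2 := hr.2 p hp
    have h3 := hr.1 _ hp
    simp only [greedyRows]
    split_ifs with h
    · have := h2.2 h
      omega
    · omega

theorem isCompat_greedyRows {ℓ : ℕ} {a r : ℕ → ℕ} (hr : IsCompat ℓ a r) :
    IsCompat ℓ a (greedyRows a) := by
  refine ⟨fun p _ => greedyRows_le a p, fun p hp => ?_⟩
  have h1 := le_greedyRows hr p (by omega)
  have h2 := hr.2 p hp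
  simp only [greedyRows]
  split_ifs with h
  · have := h2.2 h
    omega
  · omega

theorem isGreedy_greedyRows {ℓ : ℕ} {a r : ℕ → ℕ} (hr : IsCompat ℓ a r) :
    IsGreedy ℓ a (greedyRows a) := by
  refine ⟨fun _ => rfl, fun p hp => ?_⟩
  have h1 := le_greedyRows hr p (by omega)
  have h2 := hr.2 p hp
  simp only [greedyRows]
  split_ifs with h
  · have := h2.2 h
    omega
  · omega

/-! ### Partial sums and refinement -/

theorem psum_eq_sum_take {n : ℕ} (a : Fin n → ℕ) (i : ℕ) :
    psum a i = ((List.ofFn a).take i).sum := by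
  rw [List.sum_take_ofFn, psum]

theorem psum_mono {n : ℕ} (a : Fin n → ℕ) : Monotone (psum a) := by
  intro i j hij
  refine Finset.sum_le_sum_of_subset fun k hk => ?_
  simp only [Finset.mem_filter, Finset.mem_univ, true_and] at hk ⊢
  omega

theorem psum_zero {n : ℕ} (a : Fin n → ℕ) : psum a 0 = 0 := by
  simp [psum]

theorem psum_of_le {n : ℕ} (a : Fin n → ℕ) {i : ℕ} (hi : n ≤ i) : psum a i = ∑ j, a j := by
  rw [psum, Finset.filter_true_of_mem]
  intro j _
  omega

theorem psum_succ {n : ℕ} (a : Fin n → ℕ) (i : Fin n) :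
    psum a (i + 1) = psum a i + a i := by
  have : (Finset.univ.filter fun j : Fin n => (j : ℕ) < i + 1) =
      insert i (Finset.univ.filter fun j : Fin n => (j : ℕ) < i) := by
    ext j
    simp only [Finset.mem_filter, Finset.mem_univ, true_and, Finset.mem_insert, Fin.ext_iff]
    omega
  rw [psum, this, Finset.sum_insert (by simp), psum, add_comm]

theorem psum_injective {n : ℕ} {a b : Fin n → ℕ} (h : ∀ i, i ≤ n → psum a i = psum b i) :
    a = b := by
  funext i
  have h1 := h i i.2.le
  have h2 := h (i + 1) i.2
  rw [psum_succ, psum_succ] at h2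
  omega

theorem exists_take_filter_sum (l : List ℕ) :
    ∀ k, ∃ k', ((l.filter (fun x => x ≠ 0)).take k).sum = (l.take k').sum := by
  induction l with
  | nil => simp
  | cons x t ih =>
    intro k
    by_cases hx : x = 0
    · obtain ⟨k', hk'⟩ := ih k
      exact ⟨k' + 1, by simpa [hx] using hk'⟩
    · cases k with
      | zero => exact ⟨0, by simp⟩
      | succ k =>
        obtain ⟨k', hk'⟩ := ih k
        exact ⟨k' + 1, by simpa [hx] using hk'⟩

theorem exists_take_sum_filter (l : List ℕ) :
    ∀ k, ∃ k', (l.take k).sum = ((l.filter (fun x => x ≠ 0)).take k').sum := by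
  induction l with
  | nil => simp
  | cons x t ih =>
    intro k
    cases k with
    | zero => exact ⟨0, by simp⟩
    | succ k =>
      obtain ⟨k', hk'⟩ := ih k
      by_cases hx : x = 0
      · exact ⟨k', by simpa [hx] using hk'⟩
      · exact ⟨k' + 1, by simpa [hx] using hk'⟩

theorem sum_filter_ne_zero (l : List ℕ) : (l.filter (fun x => x ≠ 0)).sum = l.sum := by
  induction l with
  | nil => simp
  | cons x t ih =>
    by_cases hx : x = 0
    · simpa [hx] using ih
    · simpa [hx] using ih

theorem Refines.sum_eq {β α : List ℕ} (h : Refines β α) : β.sum = α.sum := by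
  obtain ⟨L, rfl, rfl⟩ := h
  exact List.sum_flatten

theorem Refines.exists_take {β α : List ℕ} (h : Refines β α) (k : ℕ) :
    ∃ k', (α.take k).sum = (β.take k').sum := by
  obtain ⟨L, rfl, rfl⟩ := h
  refine ⟨(L.take k).flatten.length, ?_⟩
  have : L.flatten = (L.take k).flatten ++ (L.drop k).flatten := by
    rw [← List.flatten_append, List.take_append_drop]
  rw [this, List.take_left, List.sum_flatten, List.map_take]

theorem refines_of_exists_take (α : List ℕ) : ∀ β : List ℕ, (∀ x ∈ β, x ≠ 0) →
    β.sum = α.sum → (∀ k, ∃ k', (α.take k).sum = (β.take k').sum) → Refines β α := by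
  induction α with
  | nil =>
    intro β hβ hsum _
    refine ⟨[], ?_, rfl⟩
    cases β with
    | nil => rfl
    | cons y t =>
      have := hβ y (by simp)
      simp at hsum
      omega
  | cons x α ih =>
    intro β hβ hsum h
    obtain ⟨m, hm⟩ := h 1
    simp only [List.take_succ_cons, List.take_zero, List.sum_cons, List.sum_nil, add_zero] at hm
    have hsplit := List.sum_take_add_sum_drop β m
    obtain ⟨L, hL1, hL2⟩ := ih (β.drop m) (fun y hy => hβ y (List.mem_of_mem_drop hy))
      (by simp only [List.sum_cons] at hsum; omega) (by
        intro k
        obtain ⟨k', hk'⟩ := h (k + 1)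
        simp only [List.take_succ_cons, List.sum_cons] at hk'
        rcases le_total m k' with hmk | hmk
        · refine ⟨k' - m, ?_⟩
          have : k' = m + (k' - m) := by omega
          rw [this, List.take_add, List.sum_append] at hk'
          omega
        · refine ⟨0, ?_⟩
          have h1 : β.take m = β.take k' ++ (β.drop k').take (m - k') := by
            rw [← List.take_add]
            congr 1
            omega
          rw [h1, List.sum_append] at hm
          simp
          omega)
    exact ⟨β.take m :: L, by simp [hL1], by simp [hL2, hm]⟩

theorem refines_flat_iff {n : ℕ} (a b : Fin n → ℕ) :
    Refines (flat b) (flat a) ↔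
      ∑ i, b i = ∑ i, a i ∧ ∀ i, ∃ i', psum a i = psum b i' := by
  have hsum : ∀ c : Fin n → ℕ, (flat c).sum = ∑ i, c i := fun c => by
    rw [flat, sum_filter_ne_zero, List.sum_ofFn]
  constructor
  · intro h
    refine ⟨by rw [← hsum, ← hsum, h.sum_eq], fun i => ?_⟩
    obtain ⟨k, hk⟩ := exists_take_sum_filter (List.ofFn a) i
    obtain ⟨k', hk'⟩ := h.exists_take k
    obtain ⟨i', hi'⟩ := exists_take_filter_sum (List.ofFn b) k'
    exact ⟨i', by rw [psum_eq_sum_take, psum_eq_sum_take, hk, ← hi']; exact hk'⟩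
  · rintro ⟨h1, h2⟩
    refine refines_of_exists_take _ _ (fun x hx => ?_) (by rw [hsum, hsum, h1]) fun k => ?_
    · simpa using (List.mem_filter.1 hx).2
    · obtain ⟨i, hi⟩ := exists_take_filter_sum (List.ofFn a) k
      obtain ⟨i', hi'⟩ := h2 i
      obtain ⟨k', hk'⟩ := exists_take_sum_filter (List.ofFn b) i'
      refine ⟨k', ?_⟩
      rw [psum_eq_sum_take, psum_eq_sum_take] at hi'
      exact hi.trans (hi'.trans hk')

/-! ### Weights of compatible sequences -/

theorem rowWt_ofRows {ℓ : ℕ} {a r : ℕ → ℕ} (h : IsCompat ℓ a r) (i : ℕ) :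
    rowWt (ofRows ℓ a r) i = ((Finset.range ℓ).filter fun p => r p = i).card := by
  rw [rowWt, ofRows, Finset.filter_image, Finset.card_image_of_injOn]
  exact h.injOn.mono fun p hp => Finset.mem_coe.2 (Finset.mem_filter.1 hp).1

theorem psum_wtFin_ofRows {n ℓ : ℕ} {a r : ℕ → ℕ} (h : IsCompat ℓ a r)
    (hn : ∀ p, p < ℓ → r p < n) (i : ℕ) :
    psum (wtFin n (ofRows ℓ a r)) i = ((Finset.range ℓ).filter fun p => r p < i).card := by
  simp only [psum, wtFin, rowWt_ofRows h]
  rw [← Finset.card_biUnion]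
  · congr 1
    ext p
    simp only [Finset.mem_biUnion, Finset.mem_filter, Finset.mem_univ, true_and,
      Finset.mem_range]
    constructor
    · rintro ⟨j, hj, hp, e⟩
      exact ⟨hp, by omega⟩
    · rintro ⟨hp, hi⟩
      exact ⟨⟨r p, hn p hp⟩, hi, hp, rfl⟩
  · intro j _ k _ hjk
    refine Finset.disjoint_left.2 fun p hp hq => hjk ?_
    simp only [Finset.mem_filter] at hp hq
    exact Fin.ext (hp.2.symm.trans hq.2)

theorem card_filter_sub_le (ℓ m : ℕ) (hm : m ≤ ℓ) :
    ((Finset.range ℓ).filter fun p => ℓ - p ≤ m).card = m := by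
  have : ((Finset.range ℓ).filter fun p => ℓ - p ≤ m) = Finset.Ico (ℓ - m) ℓ := by
    ext p
    simp only [Finset.mem_filter, Finset.mem_range, Finset.mem_Ico]
    omega
  rw [this, Nat.card_Ico]
  omega

/-- The rows are determined by the partial sums of the weight. -/
theorem lt_iff_le_psum {n ℓ : ℕ} {a r : ℕ → ℕ} (h : IsCompat ℓ a r)
    (hn : ∀ p, p < ℓ → r p < n) {p : ℕ} (hp : p < ℓ) (i : ℕ) :
    r p < i ↔ ℓ - p ≤ psum (wtFin n (ofRows ℓ a r)) i := by
  rw [psum_wtFin_ofRows h hn]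
  constructor
  · intro hi
    rw [← Nat.card_Ico]
    refine Finset.card_le_card fun q hq => ?_
    simp only [Finset.mem_Ico, Finset.mem_filter, Finset.mem_range] at hq ⊢
    have := h.antitone hq.1 hq.2
    omega
  · intro hi
    by_contra hlt
    have : ((Finset.range ℓ).filter fun q => r q < i) ⊆ Finset.Ico (p + 1) ℓ := by
      intro q hq
      simp only [Finset.mem_Ico, Finset.mem_filter, Finset.mem_range] at hq ⊢
      refine ⟨?_, hq.1⟩
      by_contra hqp
      have := h.antitone (p := q) (q := p) (by omega) hp
      omega
    have := Finset.card_le_card this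
    rw [Nat.card_Ico] at this
    omega

theorem sum_wtFin_ofRows {n ℓ : ℕ} {a r : ℕ → ℕ} (h : IsCompat ℓ a r)
    (hn : ∀ p, p < ℓ → r p < n) : ∑ i, wtFin n (ofRows ℓ a r) i = ℓ := by
  rw [← psum_of_le _ le_rfl, psum_wtFin_ofRows h hn, Finset.filter_true_of_mem]
  · simp
  · simpa using hn

theorem wtFin_ofRows_injective {n ℓ : ℕ} {a r s : ℕ → ℕ} (hr : IsCompat ℓ a r)
    (hs : IsCompat ℓ a s) (hrn : ∀ p, p < ℓ → r p < n) (hsn : ∀ p, p < ℓ → s p < n)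
    (he : wtFin n (ofRows ℓ a r) = wtFin n (ofRows ℓ a s)) :
    ofRows ℓ a r = ofRows ℓ a s := by
  refine ofRows_congr fun p hp => ?_
  have h : ∀ i, r p < i ↔ s p < i := fun i => by
    rw [lt_iff_le_psum hr hrn hp, lt_iff_le_psum hs hsn hp, he]
  have h1 := h (r p + 1)
  have h2 := h (s p + 1)
  omega

theorem dominates_refines_of_compat {n ℓ : ℕ} {a r s : ℕ → ℕ} (hr : IsCompat ℓ a r)
    (hs : IsCompat ℓ a s) (hg : IsGreedy ℓ a s) (hrn : ∀ p, p < ℓ → r p < n)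
    (hsn : ∀ p, p < ℓ → s p < n) :
    Dominates (wtFin n (ofRows ℓ a r)) (wtFin n (ofRows ℓ a s)) ∧
      Refines (flat (wtFin n (ofRows ℓ a r))) (flat (wtFin n (ofRows ℓ a s))) := by
  constructor
  · intro i
    rw [psum_wtFin_ofRows hr hrn, psum_wtFin_ofRows hs hsn]
    refine Finset.card_le_card fun p hp => ?_
    simp only [Finset.mem_filter, Finset.mem_range] at hp ⊢
    exact ⟨hp.1, (hg.le hs hr p hp.1).trans_lt hp.2⟩
  · rw [refines_flat_iff, sum_wtFin_ofRows hr hrn, sum_wtFin_ofRows hs hsn]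
    refine ⟨rfl, fun i => ?_⟩
    set m := psum (wtFin n (ofRows ℓ a s)) i with hm
    have hmℓ : m ≤ ℓ := by
      rw [hm, psum_wtFin_ofRows hs hsn]
      exact (Finset.card_filter_le _ _).trans (by simp)
    rcases Nat.eq_zero_or_pos m with h0 | hpos
    · exact ⟨0, by rw [h0, psum_zero]⟩
    rcases hmℓ.eq_or_lt with hℓ | hlt
    · exact ⟨n, by rw [psum_of_le _ le_rfl, sum_wtFin_ofRows hr hrn, hℓ]⟩
    obtain ⟨p, hp⟩ : ∃ p, p + 1 + m = ℓ := ⟨ℓ - m - 1, by omega⟩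
    have h1 := lt_iff_le_psum hs hsn (p := p) (by omega) i
    have h2 := lt_iff_le_psum hs hsn (p := p + 1) (by omega) i
    have h3 := hg.descent hs (p := p) (by omega) (by omega)
    have h4 := (hr.2 p (by omega)).2 h3
    refine ⟨r p, ?_⟩
    have h5 := lt_iff_le_psum hr hrn (p := p) (by omega) (r p)
    have h6 := lt_iff_le_psum hr hrn (p := p + 1) (by omega) (r p)
    omega

theorem exists_compat_of_dominates_refines {n ℓ : ℕ} {a s : ℕ → ℕ} {b : Fin n → ℕ}
    (hs : IsCompat ℓ a s) (hsn : ∀ p, p < ℓ → s p < n)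
    (hdom : Dominates b (wtFin n (ofRows ℓ a s)))
    (href : Refines (flat b) (flat (wtFin n (ofRows ℓ a s)))) :
    ∃ r, IsCompat ℓ a r ∧ wtFin n (ofRows ℓ a r) = b := by
  rw [refines_flat_iff, sum_wtFin_ofRows hs hsn] at href
  obtain ⟨hsum, href⟩ := href
  have hex : ∀ p, ∃ i, ℓ - p ≤ psum b (i + 1) := fun p =>
    ⟨n, by rw [psum_of_le b (Nat.le_succ n), hsum]; omega⟩
  set r : ℕ → ℕ := fun p => Nat.find (hex p) with hrdef
  have hr : ∀ p, p < ℓ → ∀ i, r p < i ↔ ℓ - p ≤ psum b i := by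
    intro p hp i
    constructor
    · intro hi
      exact (Nat.find_spec (hex p)).trans (psum_mono b hi)
    · intro hi
      cases i with
      | zero =>
        rw [psum_zero] at hi
        omega
      | succ i => exact Nat.lt_succ_of_le (Nat.find_min' (hex p) hi)
  have hrn : ∀ p, p < ℓ → r p < n := fun p hp =>
    (hr p hp n).2 (by rw [psum_of_le b le_rfl, hsum]; omega)
  have hrs : ∀ p, p < ℓ → r p ≤ s p := by
    intro p hp
    have h1 := (lt_iff_le_psum hs hsn hp (s p + 1)).1 (by omega)
    have h2 := hdom ⟨s p + 1, Nat.succ_lt_succ (hsn p hp)⟩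
    have := (hr p hp (s p + 1)).2 (h1.trans h2)
    omega
  have hc : IsCompat ℓ a r := by
    refine ⟨fun p hp => (hrs p hp).trans (hs.1 p hp), fun p hp => ⟨?_, fun ha => ?_⟩⟩
    · have h1 := (hr p (by omega) (r p + 1)).1 (by omega)
      have := (hr (p + 1) hp (r p + 1)).2 (by omega)
      omega
    · have h1 := (hs.2 p hp).2 ha
      have h2 := lt_iff_le_psum hs hsn (p := p) (by omega) (s p)
      have h3 := lt_iff_le_psum hs hsn hp (s p)
      obtain ⟨i, hi⟩ := href (s p)
      have h4 := hr p (by omega) i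
      have h5 := hr (p + 1) hp i
      omega
  refine ⟨r, hc, psum_injective fun i hi => ?_⟩
  rw [psum_wtFin_ofRows hc hrn, ← card_filter_sub_le ℓ (psum b i)]
  · congr 1
    refine Finset.filter_congr fun p hp => hr p (Finset.mem_range.1 hp) i
  · rw [← hsum, ← psum_of_le b le_rfl]
    exact psum_mono b hi

/-! ### Pipe dreams -/

theorem IsPD.of_readWord_eq {w : Equiv.Perm ℕ} {P Q : Finset (ℕ × ℕ)} (h : IsPD w P)
    (he : readWord Q = readWord P) : IsPD w Q := by
  rwa [IsPD, he]

theorem IsPD.letter_ne {w : Equiv.Perm ℕ} {P : Finset (ℕ × ℕ)} (h : IsPD w P) :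
    ∀ p, p + 1 < (readWord P).length → letter (readWord P) p ≠ letter (readWord P) (p + 1) := by
  intro p hp
  have := List.isChain_iff_getElem.1 h.2.isChain_ne p hp
  simpa [letter, hp, Nat.lt_of_succ_lt hp] using this

theorem finite_setOf_isPD {w : Equiv.Perm ℕ} (hfin : ∃ N, ∀ i, N ≤ i → w i = i) :
    {P : Finset (ℕ × ℕ) | IsPD w P}.Finite := by
  obtain ⟨N, hN⟩ := hfin
  refine (Finset.finite_toSet (Finset.range N ×ˢ Finset.range N).powerset).subset ?_
  intro P hP
  simp only [Finset.coe_powerset, Set.mem_preimage, Set.mem_powerset_iff, Finset.coe_subset]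
  intro x hx
  have : x.1 + x.2 < N := by
    refine hP.2.letter_lt (fun i hi => by rw [hP.1]; exact hN i hi) _ ?_
    rw [readWord_eq_map]
    exact List.mem_map_of_mem (mem_readCells.2 hx)
  simp only [Finset.mem_product, Finset.mem_range]
  omega

theorem IsPD.row_lt {n : ℕ} {w : Equiv.Perm ℕ} (hdes : ∀ i : ℕ, n ≤ i + 1 → w i < w (i + 1))
    {P : Finset (ℕ × ℕ)} (h : IsPD w P) {r : ℕ → ℕ}
    (hr : IsCompat (readWord P).length (letter (readWord P)) r) :
    ∀ p, p < (readWord P).length → r p < n := by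
  intro p hp
  have h1 := hr.antitone (Nat.zero_le p) hp
  have h2 := hr.1 0 (by omega)
  obtain ⟨k, t, hkt⟩ := List.exists_cons_of_length_pos (Nat.zero_lt_of_lt hp)
  have h3 : letter (readWord P) 0 = k := by simp [letter, hkt]
  have h4 : w (k + 1) < w k := by
    have := (hkt ▸ h.2 : IsReducedWord (k :: t)).descent
    rwa [← hkt, h.1] at this
  by_contra hlt
  have := hdes k (by omega)
  omega

theorem isQPD_iff {w : Equiv.Perm ℕ} {Q : Finset (ℕ × ℕ)} {r : ℕ → ℕ}
    (hr : IsCompat (readWord Q).length (letter (readWord Q)) r)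
    (hQ : Q = ofRows (readWord Q).length (letter (readWord Q)) r) :
    IsQPD w Q ↔ IsPD w Q ∧ IsGreedy (readWord Q).length (letter (readWord Q)) r := by
  refine and_congr_right fun h => ?_
  rw [isGreedy_iff hr h.letter_ne, ← hQ]

theorem IsPD.exists_isQPD {w : Equiv.Perm ℕ} {P : Finset (ℕ × ℕ)} (h : IsPD w P) :
    ∃ Q, IsQPD w Q ∧ readWord Q = readWord P := by
  obtain ⟨r, hr, -⟩ := exists_eq_ofRows P
  have hc := isCompat_greedyRows hr
  have hw : readWord (ofRows (readWord P).length (letter (readWord P))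
      (greedyRows (letter (readWord P)))) = readWord P := by
    rw [readWord_ofRows hc, map_letter]
  refine ⟨_, ?_, hw⟩
  rw [isQPD_iff (r := greedyRows (letter (readWord P))) (by rwa [hw]) (by rw [hw]), hw]
  exact ⟨h.of_readWord_eq hw, isGreedy_greedyRows hr⟩

theorem IsQPD.eq_of_readWord_eq {w : Equiv.Perm ℕ} {P Q : Finset (ℕ × ℕ)} (hP : IsQPD w P)
    (hQ : IsQPD w Q) (he : readWord P = readWord Q) : P = Q := by
  obtain ⟨r, hr, hPr⟩ := exists_eq_ofRows P
  obtain ⟨s, hs, hQs⟩ := exists_eq_ofRows Q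
  have hgr := ((isQPD_iff hr hPr).1 hP).2
  have hgs := ((isQPD_iff hs hQs).1 hQ).2
  rw [he] at hr hPr hgr
  refine hPr.trans (Eq.trans ?_ hQs.symm)
  exact ofRows_congr fun p hp => le_antisymm (hgs.le hs hr p hp) (hgr.le hr hs p hp)

/-- The pipe dreams with the reading word of a quasi-Yamanouchi pipe dream `Q` generate the
fundamental slide polynomial of the weight of `Q`. -/
theorem IsQPD.sum_eq_slideF {n : ℕ} {w : Equiv.Perm ℕ}
    (hdes : ∀ i : ℕ, n ≤ i + 1 → w i < w (i + 1)) {Q : Finset (ℕ × ℕ)} (hQ : IsQPD w Q)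
    (S : Finset (Finset (ℕ × ℕ))) (hS : ∀ P, P ∈ S ↔ readWord P = readWord Q) :
    ∑ P ∈ S, MvPolynomial.monomial (Finsupp.equivFunOnFinite.symm (wtFin n P)) (1 : ℤ) =
      slideF (wtFin n Q) := by
  obtain ⟨s, hs, hQs⟩ := exists_eq_ofRows Q
  have hg := ((isQPD_iff hs hQs).1 hQ).2
  have hsn := hQ.1.row_lt hdes hs
  have hrows : ∀ P ∈ S, ∃ r, IsCompat (readWord Q).length (letter (readWord Q)) r ∧
      (∀ p, p < (readWord Q).length → r p < n) ∧
      P = ofRows (readWord Q).length (letter (readWord Q)) r := by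
    intro P hP
    obtain ⟨r, hr, hPr⟩ := exists_eq_ofRows P
    have hn := (hQ.1.of_readWord_eq ((hS P).1 hP)).row_lt hdes hr
    rw [(hS P).1 hP] at hr hPr hn
    exact ⟨r, hr, hn, hPr⟩
  rw [slideF]
  refine Finset.sum_bij (fun P _ => wtFin n P) ?_ ?_ ?_ fun _ _ => rfl
  · intro P hP
    obtain ⟨r, hr, hrn, hPr⟩ := hrows P hP
    have hdr := dominates_refines_of_compat hr hs hg hrn hsn
    rw [← hPr, ← hQs] at hdr
    refine Finset.mem_filter.2 ⟨?_, hdr⟩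
    rw [wcFinset, Fintype.mem_piFinset]
    intro i
    rw [Finset.mem_range, ← ((refines_flat_iff _ _).1 hdr.2).1]
    exact Nat.lt_succ_of_le
      (Finset.single_le_sum (f := wtFin n P) (fun _ _ => Nat.zero_le _) (Finset.mem_univ i))
  · intro P hP P' hP' he
    obtain ⟨r, hr, hrn, rfl⟩ := hrows P hP
    obtain ⟨r', hr', hrn', rfl⟩ := hrows P' hP'
    exact wtFin_ofRows_injective hr hr' hrn hrn' he
  · intro b hb
    obtain ⟨-, hdom, href⟩ := Finset.mem_filter.1 hb
    rw [hQs] at hdom href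
    obtain ⟨r, hr, hb⟩ := exists_compat_of_dominates_refines hs hsn hdom href
    exact ⟨_, (hS _).2 (by rw [readWord_ofRows hr, map_letter]), hb⟩

/-- for a permutation `w` with no descents at or after position `n`,
`𝔖_w = Σ_{P ∈ QPD(w)} 𝔉_{wt(P)}`. -/
theorem schubert_eq_sum_fundamentalSlide (n : ℕ) (w : Equiv.Perm ℕ)
    (hfin : ∃ N, ∀ i, N ≤ i → w i = i)
    (hdes : ∀ i : ℕ, n ≤ i + 1 → w i < w (i + 1)) :
    SchubertPoly n w
      = ∑ᶠ P ∈ {P : Finset (ℕ × ℕ) | IsQPD w P}, slideF (wtFin n P) := by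
  have hPD := finite_setOf_isPD hfin
  have hQPD : {P : Finset (ℕ × ℕ) | IsQPD w P}.Finite := hPD.subset fun P hP => hP.1
  have hex : ∀ P, ∃ Q, IsPD w P → IsQPD w Q ∧ readWord Q = readWord P := by
    intro P
    by_cases h : IsPD w P
    · obtain ⟨Q, hQ⟩ := h.exists_isQPD
      exact ⟨Q, fun _ => hQ⟩
    · exact ⟨P, fun h' => absurd h' h⟩
  choose g hg using hex
  rw [SchubertPoly, finsum_mem_eq_finite_toFinset_sum _ hPD,
    finsum_mem_eq_finite_toFinset_sum _ hQPD,
    ← Finset.sum_fiberwise_of_maps_to (g := g) (t := hQPD.toFinset)]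
  · refine Finset.sum_congr rfl fun Q hQ => ?_
    rw [Set.Finite.mem_toFinset] at hQ
    refine IsQPD.sum_eq_slideF hdes hQ _ fun P => ?_
    simp only [Finset.mem_filter, Set.Finite.mem_toFinset, Set.mem_ofPred_eq]
    constructor
    · rintro ⟨hP, rfl⟩
      exact (hg P hP).2.symm
    · intro he
      have hP := IsPD.of_readWord_eq hQ.1 he
      exact ⟨hP, (hg P hP).1.eq_of_readWord_eq hQ ((hg P hP).2.trans he)⟩
  · intro P hP
    rw [Set.Finite.mem_toFinset] at hP ⊢
    exact (hg P hP).1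

end SlidePaper
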